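/- Let x > 0 be real and set q = e^{−π/x}. Then F_{(4,1)}(x) = −(π/(√2 · x)) · log( (φ(−q¹⁶) − √2 · q · ψ(−q⁸)) / (φ(−q¹⁶) + √2 · q · ψ(−q⁸)) ). -/

import Mathlib

open Filter

/-- Ramanujan's theta function `φ(q) = ∑_{n ∈ ℤ} q^{n²}`. -/
noncomputable def phi (q : ℝ) : ℝ := ∑' n : ℤ, q ^ (n ^ 2)

/-- Ramanujan's theta function `ψ(q) = ∑_{n=0}^∞ q^{n(n+1)/2}`. -/
noncomputable def psi (q : ℝ) : ℝ := ∑' n : ℕ, q ^ (n * (n + 1) / 2)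

/-!
Partial fractions turn the inner sum over `m` into `π / (x a sinh (π a / x))` with `a = 4n + 1`, and
up to sign the numbers `4n + 1` run once through the odd positive integers. Expanding
`1 / sinh (π a / x)` as a geometric series in `q = e^{-π/x}` gives a double series in odd indices;
exchanging the summations produces Taylor series of `log |1 ± y e^{iθ}|²` at `y = q^{2k+1}` and
`θ = π/4`. The Jacobi triple product identifies the resulting infinite products with
`∑ q^{n²} cos nθ` at `θ` and `θ + π`, up to the common factor `∏ (1 - q^{2k})`, which cancels in
the quotient. Splitting these theta series by the parity of `n` yields `φ(-q¹⁶) ± √2 q ψ(-q⁸)`.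

The triple product itself is the limit `N → ∞` of its finite form
`∏_{k < N} (1 + z q^{2k+1}) (1 + z⁻¹ q^{2k+1}) = ∑ₙ [2N choose N + n] q^{n²} zⁿ`, with Gaussian
binomial coefficients in base `q²`.
-/

open scoped Topology Real

section IntegerSums

lemma hasSum_int_of_even_of_odd {M : Type*} [AddCommMonoid M] [TopologicalSpace M]
    [ContinuousAdd M] {f : ℤ → M} {a b : M} (heven : HasSum (fun m : ℤ => f (2 * m)) a)
    (hodd : HasSum (fun m : ℤ => f (2 * m + 1)) b) : HasSum f (a + b) := by
  have double_injective : Function.Injective fun m : ℤ => 2 * m :=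
    mul_right_injective₀ two_ne_zero
  have double_add_one_injective : Function.Injective fun m : ℤ => 2 * m + 1 :=
    (add_left_injective 1).comp double_injective
  refine HasSum.add_isCompl ?_ (double_injective.hasSum_range_iff.mpr heven)
    (double_add_one_injective.hasSum_range_iff.mpr hodd)
  convert! Int.isCompl_even_odd using 1 <;> ext n
  · simp [even_iff_exists_two_mul]
  · simp [Odd]

lemma hasSum_neg_one_zpow_mul {R : Type*} [DivisionRing R] [TopologicalSpace R]
    [IsTopologicalRing R] {f : ℤ → R} {a b : R} (hf : HasSum f a)
    (heven : HasSum (fun m : ℤ => f (2 * m)) b) :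
    HasSum (fun m : ℤ => (-1) ^ m * f m) (2 * b - a) := by
  have hindicator : HasSum (fun m : ℤ => if Even m then f m else 0) (b + 0) :=
    hasSum_int_of_even_of_odd (by simpa using heven)
      (by simp only [Int.not_even_two_mul_add_one, if_false, hasSum_zero])
  rw [add_zero] at hindicator
  refine ((hindicator.mul_left 2).sub hf).congr_fun fun m => ?_
  rcases Int.even_or_odd m with hm | hm
  · simp [hm, hm.neg_one_zpow, two_mul]
  · simp [Int.not_even_iff_odd.mpr hm, hm.neg_one_zpow]

lemma abs_four_mul_add_one (n : ℤ) : |4 * n + 1| = 2 * (Equiv.intEquivNat n : ℤ) + 1 := by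
  rcases n with n | n
  · change |4 * (n : ℤ) + 1| = 2 * ((2 * n : ℕ) : ℤ) + 1
    grind
  · change |4 * Int.negSucc n + 1| = 2 * ((2 * n + 1 : ℕ) : ℤ) + 1
    grind

lemma hasSum_int_four_mul_add_one_iff {M : Type*} [AddCommMonoid M] [TopologicalSpace M]
    {f : ℝ → M} (hf : Function.Even f) {a : M} :
    HasSum (fun n : ℤ => f (4 * n + 1)) a ↔ HasSum (fun j : ℕ => f (2 * j + 1)) a := by
  rw [← Equiv.intEquivNat.hasSum_iff]
  refine iff_of_eq (congrArg (HasSum · a) (funext fun n => ?_))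
  have habs : |4 * (n : ℝ) + 1| = 2 * (Equiv.intEquivNat n : ℝ) + 1 := by
    exact_mod_cast abs_four_mul_add_one n
  rw [Function.comp_apply, ← habs]
  rcases abs_choice (4 * (n : ℝ) + 1) with h | h <;> rw [h]
  exact (hf _).symm

end IntegerSums

section PartialFractions

lemma hasSum_one_div_sq_sub_int_sq {z : ℂ} (hz : z ∈ Complex.integerComplement) :
    HasSum (fun m : ℤ => 1 / (z ^ 2 - m ^ 2)) (π * Complex.cot (π * z) / z) := by
  have hz0 : z ≠ 0 := Complex.integerComplement.ne_zero hz
  have hcot : HasSum (cotTerm z) (π * Complex.cot (π * z) - 1 / z) :=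
    (summable_cotTerm hz).hasSum_iff_tendsto_nat.mpr (tendsto_logDeriv_euler_cot_sub hz)
  have hpos : HasSum (fun n : ℕ => 1 / (z ^ 2 - (((n : ℤ) + 1 : ℤ) : ℂ) ^ 2))
      ((π * Complex.cot (π * z) - 1 / z) / (2 * z)) := by
    refine (hcot.div_const (2 * z)).congr_fun fun n => ?_
    rw [cotTerm_identity hz, mul_div_cancel_left₀ _ (mul_ne_zero two_ne_zero hz0)]
    push_cast
    ring
  have hneg : HasSum (fun n : ℕ => 1 / (z ^ 2 - ((-((n : ℤ) + 1) : ℤ) : ℂ) ^ 2))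
      ((π * Complex.cot (π * z) - 1 / z) / (2 * z)) := by
    simpa only [Int.cast_neg, neg_sq] using hpos
  convert! hpos.of_add_one_of_neg_add_one (f := fun m : ℤ => 1 / (z ^ 2 - (m : ℂ) ^ 2)) hneg using 1
  field_simp
  push_cast
  ring

lemma half_mem_integerComplement {z : ℂ} (hz : z ∈ Complex.integerComplement) :
    z / 2 ∈ Complex.integerComplement := by
  rintro ⟨n, hn⟩
  exact hz ⟨2 * n, by push_cast; linear_combination 2 * hn⟩

lemma cot_half_sub_cot {w : ℂ} (hw : Complex.sin w ≠ 0) :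
    Complex.cot (w / 2) - Complex.cot w = 1 / Complex.sin w := by
  have hsin : Complex.sin w = 2 * Complex.sin (w / 2) * Complex.cos (w / 2) := by
    rw [← Complex.sin_two_mul, mul_div_cancel₀ _ two_ne_zero]
  have hcos : Complex.cos w = 2 * Complex.cos (w / 2) ^ 2 - 1 := by
    rw [← Complex.cos_two_mul, mul_div_cancel₀ _ two_ne_zero]
  rw [Complex.cot, Complex.cot, hcos]
  rw [hsin] at hw ⊢
  obtain ⟨hs, hc⟩ : Complex.sin (w / 2) ≠ 0 ∧ Complex.cos (w / 2) ≠ 0 := by simpa using hw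
  field_simp
  ring

lemma hasSum_neg_one_zpow_div_sq_sub_int_sq {z : ℂ} (hz : z ∈ Complex.integerComplement) :
    HasSum (fun m : ℤ => (-1) ^ m * (1 / (z ^ 2 - m ^ 2))) (π / (z * Complex.sin (π * z))) := by
  have hz0 : z ≠ 0 := Complex.integerComplement.ne_zero hz
  have heven : HasSum (fun m : ℤ => 1 / (z ^ 2 - ((2 * m : ℤ) : ℂ) ^ 2))
      (π * Complex.cot (π * z / 2) / (2 * z)) := by
    convert! (hasSum_one_div_sq_sub_int_sq (half_mem_integerComplement hz)).div_const 4 using 1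
    · funext m
      rw [div_div]
      push_cast
      ring
    · rw [mul_div_assoc]
      field_simp
      ring
  convert! hasSum_neg_one_zpow_mul (hasSum_one_div_sq_sub_int_sq hz) heven using 1
  rw [div_mul_eq_div_mul_one_div, ← cot_half_sub_cot (sin_pi_mul_ne_zero hz)]
  field_simp

lemma hasSum_neg_one_zpow_div_int_sq_add_sq {b : ℝ} (hb : b ≠ 0) :
    HasSum (fun m : ℤ => (-1 : ℝ) ^ m / (m ^ 2 + b ^ 2)) (π / (b * Real.sinh (π * b))) := by
  have hmem : b * Complex.I ∈ Complex.integerComplement := by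
    rintro ⟨n, hn⟩
    exact hb (by simpa using (congrArg Complex.im hn).symm)
  rw [← Complex.hasSum_ofReal]
  convert! (hasSum_neg_one_zpow_div_sq_sub_int_sq hmem).neg using 1
  · funext m
    rw [mul_pow, Complex.I_sq, ← mul_neg, ← div_neg, neg_sub, sub_eq_add_neg, mul_one_div]
    push_cast
    ring
  · rw [← mul_assoc, Complex.sin_mul_I, mul_mul_mul_comm, Complex.I_mul_I]
    push_cast
    ring

lemma hasSum_neg_one_zpow_div_mul_int_sq_add_sq {x a : ℝ} (hx : x ≠ 0) (ha : a ≠ 0) :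
    HasSum (fun m : ℤ => (-1 : ℝ) ^ m / ((x * m) ^ 2 + a ^ 2))
      (π / (x * a * Real.sinh (π * a / x))) := by
  convert! (hasSum_neg_one_zpow_div_int_sq_add_sq (div_ne_zero ha hx)).div_const (x ^ 2) using 1
  · funext m
    rw [div_div, add_mul, div_pow, div_mul_cancel₀ _ (pow_ne_zero 2 hx), mul_pow, mul_comm (x ^ 2)]
  · rw [mul_div_assoc]
    field_simp

end PartialFractions

section Series

lemma hasSum_exp_neg_pow_odd {u : ℝ} (hu : 0 < u) :
    HasSum (fun k : ℕ => Real.exp (-u) ^ (2 * k + 1)) (1 / (2 * Real.sinh u)) := by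
  have hlt : Real.exp (-u) ^ 2 < 1 :=
    pow_lt_one₀ (Real.exp_nonneg _) (Real.exp_lt_one_iff.mpr (neg_neg_of_pos hu)) two_ne_zero
  convert! (hasSum_geometric_of_lt_one (sq_nonneg _) hlt).mul_left (Real.exp (-u)) using 1
  · funext k
    ring
  · rw [Real.sinh_eq, Real.exp_neg]
    have hne : Real.exp u ^ 2 - 1 ≠ 0 := by
      have := Real.one_lt_exp_iff.mpr hu
      nlinarith
    field_simp

lemma norm_one_sub_ofReal_mul_exp_sq (y θ : ℝ) :
    ‖1 - (y : ℂ) * Complex.exp (θ * Complex.I)‖ ^ 2 = 1 - 2 * y * Real.cos θ + y ^ 2 := by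
  rw [Complex.sq_norm, Complex.normSq_apply]
  simp only [Complex.sub_re, Complex.one_re, Complex.re_ofReal_mul, Complex.exp_ofReal_mul_I_re,
    Complex.sub_im, Complex.one_im, Complex.im_ofReal_mul, Complex.exp_ofReal_mul_I_im]
  linear_combination y ^ 2 * Real.sin_sq_add_cos_sq θ

lemma hasSum_pow_mul_cos_div {y : ℝ} (hy : |y| < 1) (θ : ℝ) :
    HasSum (fun a : ℕ => y ^ a * Real.cos (a * θ) / a)
      (-(Real.log (1 - 2 * y * Real.cos θ + y ^ 2) / 2)) := by
  have hz : ‖(y : ℂ) * Complex.exp (θ * Complex.I)‖ < 1 := by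
    rwa [norm_mul, Complex.norm_exp_ofReal_mul_I, mul_one, Complex.norm_real]
  convert! Complex.hasSum_re (Complex.hasSum_taylorSeries_neg_log hz) using 1
  · funext a
    have hexp : (a : ℂ) * (θ * Complex.I) = ((a * θ : ℝ) : ℂ) * Complex.I := by
      push_cast
      ring
    rw [mul_pow, ← Complex.exp_nat_mul, hexp, ← Complex.ofReal_pow, Complex.div_natCast_re,
      Complex.re_ofReal_mul, Complex.exp_ofReal_mul_I_re]
  · rw [Complex.neg_re, Complex.log_re, ← norm_one_sub_ofReal_mul_exp_sq, Real.log_pow]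
    push_cast
    ring

lemma hasSum_odd_pow_mul_cos_div {y : ℝ} (hy : |y| < 1) (θ : ℝ) :
    HasSum (fun j : ℕ => y ^ (2 * j + 1) * Real.cos ((2 * j + 1) * θ) / (2 * j + 1))
      ((Real.log (1 + 2 * y * Real.cos θ + y ^ 2) -
        Real.log (1 - 2 * y * Real.cos θ + y ^ 2)) / 4) := by
  have hdiff := ((hasSum_pow_mul_cos_div hy θ).sub
    (hasSum_pow_mul_cos_div (by rwa [abs_neg]) θ : HasSum (fun a : ℕ => (-y) ^ a * _ / _) _))
  have hinj : Function.Injective fun j : ℕ => 2 * j + 1 := fun i j hij => by simpa using hij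
  rw [← hinj.hasSum_iff] at hdiff
  · convert! hdiff.div_const 2 using 1
    · funext j
      simp only [Function.comp_apply, Odd.neg_pow ⟨j, rfl⟩]
      push_cast
      ring
    · ring_nf
  · intro a ha
    have heven : Even a := by
      rw [← Nat.not_odd_iff_even]
      exact fun ⟨j, hj⟩ => ha ⟨j, hj.symm⟩
    rw [heven.neg_pow, sub_self]

end Series

section QBinomial

variable {K : Type*} [Field K]

/-- The `q`-Pochhammer symbol `(p; p)_k = (1 - p)(1 - p²) ⋯ (1 - p^k)`. -/
def qPochhammer (p : K) (k : ℕ) : K := ∏ j ∈ Finset.range k, (1 - p ^ (j + 1))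

/-- The reciprocal `1 / (p; p)_k`, extended by zero to negative `k` so that the terminating sums in
the triple product can be taken over all of `ℤ`. -/
def qPochhammerInv (p : K) : ℤ → K
  | .ofNat k => (qPochhammer p k)⁻¹
  | .negSucc _ => 0

/-- The Gaussian binomial coefficient `[2N choose N + n]` in base `p`, zero for `|n| > N`; it is
meaningful only when `p` is not a root of unity, as otherwise some reciprocals are `0⁻¹ = 0`. -/
def centralQBinom (p : K) (N : ℕ) (n : ℤ) : K :=
  qPochhammer p (2 * N) * qPochhammerInv p (N - n) * qPochhammerInv p (N + n)

variable {p : K}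

lemma qPochhammer_succ (p : K) (k : ℕ) :
    qPochhammer p (k + 1) = qPochhammer p k * (1 - p ^ (k + 1)) :=
  Finset.prod_range_succ _ _

lemma qPochhammerInv_of_neg (p : K) {k : ℤ} (hk : k < 0) : qPochhammerInv p k = 0 := by
  obtain ⟨m, rfl⟩ := Int.eq_negSucc_of_lt_zero hk
  rfl

lemma qPochhammerInv_eq_mul_succ (hp : ∀ k : ℕ, p ^ (k + 1) ≠ 1) (k : ℤ) :
    qPochhammerInv p k = (1 - p ^ (k + 1)) * qPochhammerInv p (k + 1) := by
  rcases k with m | _ | m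
  · change (qPochhammer p m)⁻¹ = (1 - p ^ ((m + 1 : ℕ) : ℤ)) * (qPochhammer p (m + 1))⁻¹
    rw [zpow_natCast, qPochhammer_succ, mul_inv_rev,
      mul_inv_cancel_left₀ (sub_ne_zero.mpr (hp m).symm)]
  · simp [qPochhammerInv]
  · rw [qPochhammerInv_of_neg p (Int.negSucc_lt_zero _),
      qPochhammerInv_of_neg p (by grind), mul_zero]

lemma centralQBinom_zero (p : K) (n : ℤ) : centralQBinom p 0 n = if n = 0 then 1 else 0 := by
  rcases lt_trichotomy n 0 with hn | rfl | hn
  · simp [centralQBinom, qPochhammerInv_of_neg p hn, hn.ne]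
  · simp [centralQBinom, qPochhammerInv, qPochhammer]
  · simp [centralQBinom, qPochhammerInv_of_neg p (neg_neg_of_pos hn), hn.ne']

lemma centralQBinom_succ (hp0 : p ≠ 0) (hp : ∀ k : ℕ, p ^ (k + 1) ≠ 1) (N : ℕ) (n : ℤ) :
    centralQBinom p (N + 1) n = (1 + p ^ (2 * N + 1)) * centralQBinom p N n
      + p ^ (N - n + 1) * centralQBinom p N (n - 1)
      + p ^ (N + n + 1) * centralQBinom p N (n + 1) := by
  obtain ⟨u, hu⟩ : ∃ u : ℤ, u = N - n := ⟨_, rfl⟩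
  obtain ⟨v, hv⟩ : ∃ v : ℤ, v = N + n := ⟨_, rfl⟩
  have hpow : p ^ (2 * N) = p ^ u * p ^ v := by
    rw [← zpow_add₀ hp0, ← zpow_natCast]
    congr 1
    grind
  have hprev (k : ℤ) : qPochhammerInv p (k - 1) = (1 - p ^ k) * qPochhammerInv p k := by
    simpa using qPochhammerInv_eq_mul_succ hp (k - 1)
  simp only [centralQBinom, Nat.mul_succ, Nat.cast_succ, qPochhammer_succ]
  rw [show (N : ℤ) + 1 - n = u + 1 by grind, show (N : ℤ) + 1 + n = v + 1 by grind,
    show (N : ℤ) - (n - 1) = u + 1 by grind, show (N : ℤ) + (n - 1) = v - 1 by grind,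
    show (N : ℤ) - (n + 1) = u - 1 by grind, show (N : ℤ) + (n + 1) = v + 1 by grind,
    ← hu, ← hv, hprev u, hprev v, qPochhammerInv_eq_mul_succ hp u,
    qPochhammerInv_eq_mul_succ hp v, zpow_add_one₀ hp0, zpow_add_one₀ hp0,
    pow_succ p (2 * N + 1), pow_succ p (2 * N), hpow]
  ring

end QBinomial

section TripleProduct

variable {𝕜 : Type*} [NormedField 𝕜] {p q z : 𝕜}

lemma norm_pow_lt_one (hp : ‖p‖ < 1) {k : ℕ} (hk : k ≠ 0) : ‖p ^ k‖ < 1 := by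
  rw [norm_pow]
  exact pow_lt_one₀ (norm_nonneg p) hp hk

lemma pow_succ_ne_one_of_norm_lt_one (hp : ‖p‖ < 1) (k : ℕ) : p ^ (k + 1) ≠ 1 := fun h =>
  (norm_pow_lt_one hp k.succ_ne_zero).ne (by rw [h, norm_one])

lemma pow_two_zpow_mul_zpow_sq (hq0 : q ≠ 0) (N : ℕ) (n : ℤ) :
    (q ^ 2) ^ (N + n + 1) * q ^ (n ^ 2) = q ^ (2 * N + 1) * q ^ ((n + 1) ^ 2) := by
  rw [← zpow_natCast q 2, ← zpow_natCast q (2 * N + 1), ← zpow_mul, ← zpow_add₀ hq0,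
    ← zpow_add₀ hq0]
  congr 1
  push_cast
  ring

lemma hasSum_centralQBinom_mul (hq0 : q ≠ 0) (hq : ‖q‖ < 1) (hz : z ≠ 0) (N : ℕ) :
    HasSum (fun n : ℤ => centralQBinom (q ^ 2) N n * (q ^ (n ^ 2) * z ^ n))
      (∏ k ∈ Finset.range N, (1 + z * q ^ (2 * k + 1)) * (1 + z⁻¹ * q ^ (2 * k + 1))) := by
  have hq2 := norm_pow_lt_one hq two_ne_zero
  induction N with
  | zero =>
    convert! hasSum_ite_eq (0 : ℤ) (1 : 𝕜) using 1
    funext n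
    rcases eq_or_ne n 0 with rfl | hn
    · simp [centralQBinom_zero]
    · simp [centralQBinom_zero, hn]
  | succ N ih =>
    have hprev := ((Equiv.subRight (1 : ℤ)).hasSum_iff.mpr ih).mul_left (z * q ^ (2 * N + 1))
    have hnext := ((Equiv.addRight (1 : ℤ)).hasSum_iff.mpr ih).mul_left (z⁻¹ * q ^ (2 * N + 1))
    convert! ((ih.mul_left (1 + (q ^ (2 * N + 1)) ^ 2)).add hprev).add hnext using 1
    · funext n
      have hzprev : z * z ^ (n - 1) = z ^ n := by rw [zpow_sub_one₀ hz]; field_simp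
      have hznext : z⁻¹ * z ^ (n + 1) = z ^ n := by rw [zpow_add_one₀ hz]; field_simp
      have hqprev := pow_two_zpow_mul_zpow_sq hq0 N (-n)
      have hqnext := pow_two_zpow_mul_zpow_sq hq0 N n
      rw [neg_sq, ← sub_eq_add_neg, show (-n + 1) ^ 2 = (n - 1) ^ 2 by ring] at hqprev
      simp only [Function.comp_apply, Equiv.subRight_apply, Equiv.coe_addRight]
      rw [centralQBinom_succ (pow_ne_zero 2 hq0) (pow_succ_ne_one_of_norm_lt_one hq2)]
      linear_combination centralQBinom (q ^ 2) N (n - 1) *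
          (z ^ n * hqprev - q ^ (2 * N + 1) * q ^ ((n - 1) ^ 2) * hzprev) +
        centralQBinom (q ^ 2) N (n + 1) *
          (z ^ n * hqnext - q ^ (2 * N + 1) * q ^ ((n + 1) ^ 2) * hznext)
    · rw [Finset.prod_range_succ]
      field_simp
      ring

lemma summable_norm_pow_linear (hq : ‖q‖ < 1) {c : ℕ} (hc : c ≠ 0) (d : ℕ) :
    Summable fun k : ℕ => ‖q ^ (c * k + d)‖ := by
  have hlt : ‖q‖ ^ c < 1 := pow_lt_one₀ (norm_nonneg q) hq hc
  refine ((summable_geometric_of_lt_one (by positivity) hlt).mul_right (‖q‖ ^ d)).congr fun k => ?_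
  rw [norm_pow, pow_add, pow_mul]

lemma summable_norm_zpow_sq_mul_zpow (hq : ‖q‖ < 1) (z : 𝕜) :
    Summable fun n : ℤ => ‖q ^ (n ^ 2) * z ^ n‖ := by
  have hnat (w : 𝕜) : Summable fun n : ℕ => ‖q ^ (n ^ 2) * w ^ n‖ := by
    have htendsto : Tendsto (fun n : ℕ => ‖q‖ ^ n * ‖w‖) atTop (𝓝 0) := by
      simpa using (tendsto_pow_atTop_nhds_zero_of_lt_one (norm_nonneg q) hq).mul_const ‖w‖
    refine Summable.of_norm_bounded_eventually_nat summable_geometric_two ?_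
    filter_upwards [htendsto.eventually_le_const (by norm_num : (0 : ℝ) < 1 / 2)] with n hn
    calc ‖‖q ^ (n ^ 2) * w ^ n‖‖ = (‖q‖ ^ n * ‖w‖) ^ n := by
          rw [norm_norm, norm_mul, norm_pow, norm_pow, mul_pow, ← pow_mul, sq]
      _ ≤ (1 / 2) ^ n := by gcongr
  refine Summable.of_nat_of_neg ((hnat z).congr fun n => ?_) ((hnat z⁻¹).congr fun n => ?_)
  · rw [zpow_natCast, ← zpow_natCast q]
    push_cast
    rfl
  · rw [neg_sq, zpow_neg, zpow_natCast, inv_pow, ← zpow_natCast q]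
    push_cast
    rfl

variable [CompleteSpace 𝕜]

lemma qPochhammer_tprod_ne_zero (hp : ‖p‖ < 1) : ∏' k : ℕ, (1 - p ^ (k + 1)) ≠ 0 := by
  simp only [sub_eq_add_neg]
  refine tprod_one_add_ne_zero_of_summable (fun k => ?_) ?_
  · rw [← sub_eq_add_neg]
    exact sub_ne_zero.mpr (pow_succ_ne_one_of_norm_lt_one hp k).symm
  · simpa using summable_norm_pow_linear hp one_ne_zero 1

lemma tendsto_qPochhammer (hp : ‖p‖ < 1) :
    Tendsto (qPochhammer p) atTop (𝓝 (∏' k : ℕ, (1 - p ^ (k + 1)))) := by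
  refine Multipliable.tendsto_prod_tprod_nat ?_
  simp only [sub_eq_add_neg]
  exact multipliable_one_add_of_summable (by simpa using summable_norm_pow_linear hp one_ne_zero 1)

lemma tendsto_qPochhammerInv (hp : ‖p‖ < 1) :
    Tendsto (fun k : ℕ => qPochhammerInv p k) atTop (𝓝 (∏' k : ℕ, (1 - p ^ (k + 1)))⁻¹) :=
  (tendsto_qPochhammer hp).inv₀ (qPochhammer_tprod_ne_zero hp)

lemma tendsto_centralQBinom (hp : ‖p‖ < 1) (n : ℤ) :
    Tendsto (fun N : ℕ => centralQBinom p N n) atTop (𝓝 (∏' k : ℕ, (1 - p ^ (k + 1)))⁻¹) := by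
  have hinv : Tendsto (qPochhammerInv p) atTop (𝓝 (∏' k : ℕ, (1 - p ^ (k + 1)))⁻¹) := by
    rw [← Nat.map_cast_int_atTop]
    exact tendsto_qPochhammerInv hp
  have hsub : Tendsto (fun N : ℕ => (N : ℤ) - n) atTop atTop :=
    tendsto_atTop_add_const_right _ (-n) tendsto_natCast_atTop_atTop
  have hadd : Tendsto (fun N : ℕ => (N : ℤ) + n) atTop atTop :=
    tendsto_atTop_add_const_right _ n tendsto_natCast_atTop_atTop
  have hdouble : Tendsto (fun N : ℕ => 2 * N) atTop atTop :=
    tendsto_id.const_mul_atTop' two_pos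
  simpa [qPochhammer_tprod_ne_zero hp, Function.comp_def, centralQBinom] using
    (((tendsto_qPochhammer hp).comp hdouble).mul (hinv.comp hsub)).mul (hinv.comp hadd)

lemma exists_norm_centralQBinom_le (hp : ‖p‖ < 1) :
    ∃ C : ℝ, ∀ (N : ℕ) (n : ℤ), ‖centralQBinom p N n‖ ≤ C := by
  obtain ⟨A, hA⟩ := (tendsto_qPochhammer hp).norm.bddAbove_range
  obtain ⟨B, hB⟩ := (tendsto_qPochhammerInv hp).norm.bddAbove_range
  have hAle (k : ℕ) : ‖qPochhammer p k‖ ≤ A := hA ⟨k, rfl⟩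
  have hB0 : 0 ≤ B := (norm_nonneg _).trans (hB ⟨0, rfl⟩)
  have hBle (k : ℤ) : ‖qPochhammerInv p k‖ ≤ B := by
    rcases k with k | k
    · exact hB ⟨k, rfl⟩
    · simpa [qPochhammerInv] using hB0
  refine ⟨A * B * B, fun N n => ?_⟩
  rw [centralQBinom, norm_mul, norm_mul]
  have hA0 : 0 ≤ A := (norm_nonneg _).trans (hAle 0)
  gcongr
  exacts [hAle _, hBle _, hBle _]

lemma multipliable_one_add_mul_pow_odd (hq : ‖q‖ < 1) (z : 𝕜) :
    Multipliable fun k : ℕ => 1 + z * q ^ (2 * k + 1) :=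
  multipliable_one_add_of_summable <| by
    simpa only [norm_mul] using (summable_norm_pow_linear hq two_ne_zero 1).mul_left ‖z‖

theorem jacobi_triple_product (hq0 : q ≠ 0) (hq : ‖q‖ < 1) (hz : z ≠ 0) :
    ∑' n : ℤ, q ^ (n ^ 2) * z ^ n = (∏' k : ℕ, (1 - (q ^ 2) ^ (k + 1))) *
      ∏' k : ℕ, (1 + z * q ^ (2 * k + 1)) * (1 + z⁻¹ * q ^ (2 * k + 1)) := by
  have hq2 := norm_pow_lt_one hq two_ne_zero
  obtain ⟨C, hC⟩ := exists_norm_centralQBinom_le hq2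
  have hsum : Tendsto
      (fun N : ℕ => ∑' n : ℤ, centralQBinom (q ^ 2) N n * (q ^ (n ^ 2) * z ^ n)) atTop
      (𝓝 (∑' n : ℤ, (∏' k : ℕ, (1 - (q ^ 2) ^ (k + 1)))⁻¹ * (q ^ (n ^ 2) * z ^ n))) := by
    refine tendsto_tsum_of_dominated_convergence ((summable_norm_zpow_sq_mul_zpow hq z).mul_left C)
      (fun n => (tendsto_centralQBinom hq2 n).mul_const _)
      (Eventually.of_forall fun N n => ?_)
    rw [norm_mul]
    gcongr
    exact hC N n
  have hprod : Tendsto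
      (fun N : ℕ => ∑' n : ℤ, centralQBinom (q ^ 2) N n * (q ^ (n ^ 2) * z ^ n)) atTop
      (𝓝 (∏' k : ℕ, (1 + z * q ^ (2 * k + 1)) * (1 + z⁻¹ * q ^ (2 * k + 1)))) := by
    simp only [(hasSum_centralQBinom_mul hq0 hq hz _).tsum_eq]
    exact ((multipliable_one_add_mul_pow_odd hq z).mul
      (multipliable_one_add_mul_pow_odd hq z⁻¹)).tendsto_prod_tprod_nat
  rw [← tendsto_nhds_unique hsum hprod, tsum_mul_left,
    mul_inv_cancel_left₀ (qPochhammer_tprod_ne_zero hq2)]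

end TripleProduct

section CosineTheta

/-- The even theta function `∑ q^{n²} cos nθ`, which is Jacobi's `ϑ₃(θ/2, q)`. -/
noncomputable def cosTheta (q θ : ℝ) : ℝ := ∑' n : ℤ, q ^ (n ^ 2) * Real.cos (n * θ)

/-- The part of `cosTheta` carried by odd frequencies, which is Jacobi's `ϑ₂(θ, q⁴)`. -/
noncomputable def oddCosTheta (q θ : ℝ) : ℝ :=
  ∑' m : ℤ, q ^ ((2 * m + 1) ^ 2) * Real.cos ((2 * m + 1) * θ)

variable {q : ℝ}

lemma summable_zpow_sq_mul_cos (hq : ‖q‖ < 1) (θ : ℝ) :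
    Summable fun n : ℤ => q ^ (n ^ 2) * Real.cos (n * θ) := by
  refine Summable.of_norm_bounded (summable_norm_zpow_sq_mul_zpow hq 1) fun n => ?_
  rw [one_zpow, mul_one, norm_mul]
  exact mul_le_of_le_one_right (norm_nonneg _) (Real.abs_cos_le_one _)

lemma hasSum_oddCosTheta (hq : ‖q‖ < 1) (θ : ℝ) :
    HasSum (fun m : ℤ => q ^ ((2 * m + 1) ^ 2) * Real.cos ((2 * m + 1) * θ))
      (oddCosTheta q θ) := by
  have hinj : Function.Injective fun m : ℤ => 2 * m + 1 := fun i j hij => by simpa using hij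
  refine Summable.hasSum (((summable_zpow_sq_mul_cos hq θ).comp_injective hinj).congr fun m => ?_)
  simp only [Function.comp_apply]
  push_cast
  rfl

lemma cosTheta_eq_cosTheta_add_oddCosTheta (hq : ‖q‖ < 1) (θ : ℝ) :
    cosTheta q θ = cosTheta (q ^ 4) (2 * θ) + oddCosTheta q θ := by
  refine (hasSum_int_of_even_of_odd ?_ ?_).tsum_eq
  · convert! (summable_zpow_sq_mul_cos (norm_pow_lt_one hq four_ne_zero) (2 * θ)).hasSum using 1
    funext m
    rw [← zpow_natCast q 4, ← zpow_mul]
    push_cast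
    ring_nf
  · convert! hasSum_oddCosTheta hq θ using 1
    push_cast
    rfl

lemma cosTheta_add_two_pi (q θ : ℝ) : cosTheta q (θ + 2 * π) = cosTheta q θ := by
  simp only [cosTheta, mul_add, Real.cos_add_int_mul_two_pi]

lemma oddCosTheta_add_pi (q θ : ℝ) : oddCosTheta q (θ + π) = -oddCosTheta q θ := by
  rw [oddCosTheta, oddCosTheta, ← tsum_neg]
  congr 1 with m
  rw [show (2 * m + 1) * (θ + π) = (2 * m + 1) * θ + π + m * (2 * π) by ring,
    Real.cos_add_int_mul_two_pi, Real.cos_add_pi, mul_neg]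

lemma cosTheta_add_pi (hq : ‖q‖ < 1) (θ : ℝ) :
    cosTheta q (θ + π) = cosTheta (q ^ 4) (2 * θ) - oddCosTheta q θ := by
  rw [cosTheta_eq_cosTheta_add_oddCosTheta hq, mul_add, cosTheta_add_two_pi, oddCosTheta_add_pi,
    sub_eq_add_neg]

lemma cosTheta_pi (q : ℝ) : cosTheta q π = phi (-q) := by
  refine tsum_congr fun n => ?_
  rw [Real.cos_int_mul_pi]
  rcases Int.even_or_odd n with hn | hn
  · rw [hn.neg_one_zpow, mul_one, (hn.pow_of_ne_zero two_ne_zero).neg_zpow]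
  · rw [hn.neg_one_zpow, mul_neg_one, hn.pow.neg_zpow]

lemma oddCosTheta_pi_div_two (q : ℝ) : oddCosTheta q (π / 2) = 0 := by
  have hcos (m : ℤ) : Real.cos ((2 * m + 1) * (π / 2)) = 0 :=
    Real.cos_eq_zero_iff.mpr ⟨m, by ring⟩
  simp only [oddCosTheta, hcos, mul_zero, tsum_zero]

lemma cosTheta_pi_div_two (hq : ‖q‖ < 1) : cosTheta q (π / 2) = phi (-q ^ 4) := by
  rw [cosTheta_eq_cosTheta_add_oddCosTheta hq, oddCosTheta_pi_div_two, add_zero,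
    mul_div_cancel₀ _ two_ne_zero, cosTheta_pi]

lemma cos_four_mul_add_one_mul_pi_div_four (n : ℤ) :
    Real.cos ((4 * n + 1) * (π / 4)) = (-1) ^ n * (√2 / 2) := by
  rw [show (4 * n + 1) * (π / 4) = π / 4 + n * π by ring, Real.cos_add_int_mul_pi,
    Real.cos_pi_div_four]

lemma cos_two_mul_add_one_mul_pi_div_four (l : ℕ) :
    Real.cos ((2 * l + 1) * (π / 4)) = (-1) ^ (l * (l + 1) / 2) * (√2 / 2) := by
  rcases Nat.even_or_odd' l with ⟨j, rfl | rfl⟩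
  · have hexp : 2 * j * (2 * j + 1) / 2 = 2 * (j * j) + j := by grind
    have hcos := cos_four_mul_add_one_mul_pi_div_four j
    rw [hexp, pow_add, (even_two_mul _).neg_one_pow, one_mul]
    push_cast at hcos ⊢
    rw [← zpow_natCast, ← hcos]
    ring_nf
  · have hexp : (2 * j + 1) * (2 * j + 1 + 1) / 2 = 2 * (j * j + j) + (j + 1) := by grind
    have hcos := cos_four_mul_add_one_mul_pi_div_four (-((j + 1 : ℕ) : ℤ))
    rw [zpow_neg, ← inv_zpow, inv_neg_one, zpow_natCast] at hcos
    rw [hexp, pow_add, (even_two_mul _).neg_one_pow, one_mul, ← hcos, ← Real.cos_neg]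
    push_cast
    ring_nf

lemma zpow_two_mul_add_one_sq {G : Type*} [DivInvMonoid G] (q : G) (l : ℕ) :
    q ^ ((2 * (l : ℤ) + 1) ^ 2) = q * (q ^ 8) ^ (l * (l + 1) / 2) := by
  have hdiv : 2 * (l * (l + 1) / 2) = l * (l + 1) :=
    Nat.mul_div_cancel' (Nat.even_mul_succ_self l).two_dvd
  rw [← pow_mul, ← pow_succ', ← zpow_natCast]
  congr 1
  zify at hdiv
  push_cast
  linear_combination (-4) * hdiv

lemma oddCosTheta_pi_div_four (hq : ‖q‖ < 1) :
    oddCosTheta q (π / 4) = √2 * q * psi (-q ^ 8) := by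
  set f : ℤ → ℝ := fun m => q ^ ((2 * m + 1) ^ 2) * Real.cos ((2 * m + 1) * (π / 4)) with hf
  have hnonneg (l : ℕ) : f l = √2 * q / 2 * (-q ^ 8) ^ (l * (l + 1) / 2) := by
    rw [hf]
    simp only [zpow_two_mul_add_one_sq, Int.cast_natCast, cos_two_mul_add_one_mul_pi_div_four]
    rw [neg_pow (q ^ 8)]
    ring
  have hreflect (m : ℤ) : f (-(m + 1)) = f m := by
    have hexp : (2 * -(m + 1) + 1) ^ 2 = (2 * m + 1) ^ 2 := by ring
    have hangle : (2 * ((-(m + 1) : ℤ) : ℝ) + 1) * (π / 4) = -((2 * m + 1) * (π / 4)) := by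
      push_cast
      ring
    simp only [hf, hexp, hangle, Real.cos_neg]
  have hsummable : Summable fun l : ℕ => f l :=
    (hasSum_oddCosTheta hq (π / 4)).summable.comp_injective Nat.cast_injective
  calc ∑' m : ℤ, f m = ∑' l : ℕ, f l + ∑' l : ℕ, f (-(l + 1)) :=
        tsum_of_nat_of_neg_add_one hsummable (by simpa only [hreflect] using hsummable)
    _ = √2 * q * psi (-q ^ 8) := by
        simp only [hreflect, hnonneg, tsum_mul_left, psi]
        ring

lemma cosTheta_pi_div_four (hq : ‖q‖ < 1) :
    cosTheta q (π / 4) = phi (-q ^ 16) + √2 * q * psi (-q ^ 8) := by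
  rw [cosTheta_eq_cosTheta_add_oddCosTheta hq, oddCosTheta_pi_div_four hq,
    show 2 * (π / 4) = π / 2 by ring, cosTheta_pi_div_two (norm_pow_lt_one hq four_ne_zero),
    ← pow_mul]

lemma cosTheta_pi_div_four_add_pi (hq : ‖q‖ < 1) :
    cosTheta q (π / 4 + π) = phi (-q ^ 16) - √2 * q * psi (-q ^ 8) := by
  rw [cosTheta_add_pi hq, oddCosTheta_pi_div_four hq,
    show 2 * (π / 4) = π / 2 by ring, cosTheta_pi_div_two (norm_pow_lt_one hq four_ne_zero),
    ← pow_mul]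

lemma ofReal_tprod {ι : Type*} (f : ι → ℝ) : ((∏' i, f i : ℝ) : ℂ) = ∏' i, (f i : ℂ) :=
  Complex.isUniformEmbedding_ofReal.isClosedEmbedding.map_tprod (g := Complex.ofRealHom) f

theorem cosTheta_eq_tprod (hq0 : q ≠ 0) (hq : ‖q‖ < 1) (θ : ℝ) :
    cosTheta q θ = (∏' k : ℕ, (1 - (q ^ 2) ^ (k + 1))) *
      ∏' k : ℕ, (1 + 2 * q ^ (2 * k + 1) * Real.cos θ + (q ^ (2 * k + 1)) ^ 2) := by
  set z := Complex.exp (θ * Complex.I) with hz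
  have hqc : ‖(q : ℂ)‖ < 1 := by rwa [Complex.norm_real]
  have hterm (n : ℤ) :
      ((q : ℂ) ^ (n ^ 2) * z ^ n).re = q ^ (n ^ 2) * Real.cos (n * θ) := by
    rw [hz, ← Complex.exp_int_mul, ← Complex.ofReal_zpow, Complex.re_ofReal_mul, ← mul_assoc]
    norm_cast
    rw [Complex.exp_ofReal_mul_I_re]
  have hfactor (k : ℕ) : (1 + z * (q : ℂ) ^ (2 * k + 1)) * (1 + z⁻¹ * (q : ℂ) ^ (2 * k + 1)) =
      ((1 + 2 * q ^ (2 * k + 1) * Real.cos θ + (q ^ (2 * k + 1)) ^ 2 : ℝ) : ℂ) := by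
    have hcos : z + z⁻¹ = 2 * Complex.cos θ := by
      rw [hz, ← Complex.exp_neg, ← neg_mul, Complex.two_cos]
    have hinv : z * z⁻¹ = 1 := mul_inv_cancel₀ (Complex.exp_ne_zero _)
    push_cast
    linear_combination (q : ℂ) ^ (2 * k + 1) * hcos + ((q : ℂ) ^ (2 * k + 1)) ^ 2 * hinv
  have htriple := congrArg Complex.re
    (jacobi_triple_product (Complex.ofReal_ne_zero.mpr hq0) hqc
      (Complex.exp_ne_zero (θ * Complex.I)))
  rw [← hz, Complex.re_tsum (summable_norm_zpow_sq_mul_zpow hqc z).of_norm] at htriple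
  simp only [hterm, hfactor] at htriple
  rw [cosTheta, htriple, ← Complex.ofReal_re (_ * _), Complex.ofReal_mul, ofReal_tprod,
    ofReal_tprod]
  push_cast
  rfl

lemma tprod_pos_of_summable_log {ι : Type*} {f : ι → ℝ} (hpos : ∀ i, 0 < f i)
    (hlog : Summable fun i => Real.log (f i)) : 0 < ∏' i, f i := by
  rw [← Real.rexp_tsum_eq_tprod hpos hlog]
  exact Real.exp_pos _

lemma hasSum_log_tprod {ι : Type*} {f : ι → ℝ} (hpos : ∀ i, 0 < f i)
    (hlog : Summable fun i => Real.log (f i)) :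
    HasSum (fun i => Real.log (f i)) (Real.log (∏' i, f i)) := by
  rw [← Real.rexp_tsum_eq_tprod hpos hlog, Real.log_exp]
  exact hlog.hasSum

lemma one_add_two_mul_mul_cos_add_sq_pos {y : ℝ} (hy : |y| < 1) (θ : ℝ) :
    0 < 1 + 2 * y * Real.cos θ + y ^ 2 := by
  have hcos : -|y| ≤ y * Real.cos θ := by
    refine (neg_le_neg ?_).trans (neg_abs_le _)
    rw [abs_mul]
    exact mul_le_of_le_one_right (abs_nonneg y) (Real.abs_cos_le_one θ)
  nlinarith [sq_abs y]

lemma summable_log_one_add_two_mul_mul_cos_add_sq (hq : ‖q‖ < 1) (θ : ℝ) :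
    Summable fun k : ℕ =>
      Real.log (1 + 2 * q ^ (2 * k + 1) * Real.cos θ + (q ^ (2 * k + 1)) ^ 2) := by
  have hlinear := (summable_norm_pow_linear hq two_ne_zero 1).of_norm.mul_left (2 * Real.cos θ)
  have hsquare := (summable_norm_pow_linear hq four_ne_zero 2).of_norm
  refine (Real.summable_log_one_add_of_summable (hlinear.add hsquare)).congr fun k => ?_
  ring_nf

theorem hasSum_log_cosTheta_div_cosTheta_add_pi (hq0 : q ≠ 0) (hq : ‖q‖ < 1) (θ : ℝ) :
    HasSum (fun k : ℕ =>
        Real.log (1 + 2 * q ^ (2 * k + 1) * Real.cos θ + (q ^ (2 * k + 1)) ^ 2) -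
          Real.log (1 - 2 * q ^ (2 * k + 1) * Real.cos θ + (q ^ (2 * k + 1)) ^ 2))
      (Real.log (cosTheta q θ / cosTheta q (θ + π))) := by
  have hpos (α : ℝ) (k : ℕ) :=
    one_add_two_mul_mul_cos_add_sq_pos (norm_pow_lt_one hq (2 * k).succ_ne_zero) α
  have hlog := summable_log_one_add_two_mul_mul_cos_add_sq hq
  have htprod (α : ℝ) := (tprod_pos_of_summable_log (hpos α) (hlog α)).ne'
  rw [cosTheta_eq_tprod hq0 hq, cosTheta_eq_tprod hq0 hq,
    mul_div_mul_left _ _ (qPochhammer_tprod_ne_zero (norm_pow_lt_one hq two_ne_zero)),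
    Real.log_div (htprod θ) (htprod (θ + π))]
  refine ((hasSum_log_tprod (hpos θ) (hlog θ)).sub
    (hasSum_log_tprod (hpos (θ + π)) (hlog (θ + π)))).congr_fun fun k => ?_
  rw [Real.cos_add_pi, mul_neg, ← sub_eq_add_neg]

end CosineTheta

section LambertSeries

variable {q : ℝ}

lemma summable_odd_pow_odd_pow_mul_cos_div (hq : ‖q‖ < 1) (θ : ℝ) :
    Summable fun i : ℕ × ℕ =>
      (q ^ (2 * i.1 + 1)) ^ (2 * i.2 + 1) * Real.cos ((2 * i.2 + 1) * θ) / (2 * i.2 + 1) := by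
  have hgeom : Summable fun k : ℕ => ‖q‖ ^ k := summable_geometric_of_lt_one (norm_nonneg q) hq
  refine Summable.of_norm_bounded
    (hgeom.mul_of_nonneg hgeom (fun k => by positivity) (fun k => by positivity)) fun ⟨k, j⟩ => ?_
  have hcos : ‖Real.cos ((2 * j + 1) * θ) / (2 * j + 1)‖ ≤ 1 := by
    rw [norm_div, Real.norm_of_nonneg (by positivity : (0 : ℝ) ≤ 2 * j + 1)]
    exact div_le_one_of_le₀ ((Real.abs_cos_le_one _).trans (by simp)) (by positivity)
  calc _ = ‖q‖ ^ ((2 * k + 1) * (2 * j + 1)) * ‖Real.cos ((2 * j + 1) * θ) / (2 * j + 1)‖ := by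
        rw [mul_div_assoc, norm_mul, ← pow_mul, norm_pow]
    _ ≤ ‖q‖ ^ (k + j) * 1 := by
        gcongr ?_ * ?_
        exact pow_le_pow_of_le_one (norm_nonneg q) hq.le (by nlinarith)
    _ = ‖q‖ ^ k * ‖q‖ ^ j := by rw [mul_one, pow_add]

theorem hasSum_cos_div_mul_tsum_odd_pow (hq0 : q ≠ 0) (hq : ‖q‖ < 1) (θ : ℝ) :
    HasSum (fun j : ℕ =>
        Real.cos ((2 * j + 1) * θ) / (2 * j + 1) * ∑' k : ℕ, (q ^ (2 * j + 1)) ^ (2 * k + 1))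
      (Real.log (cosTheta q θ / cosTheta q (θ + π)) / 4) := by
  have hsummable := summable_odd_pow_odd_pow_mul_cos_div hq θ
  have hrows := hsummable.hasSum.prod_fiberwise fun k =>
    hasSum_odd_pow_mul_cos_div (norm_pow_lt_one hq (2 * k).succ_ne_zero) θ
  rw [← hrows.unique ((hasSum_log_cosTheta_div_cosTheta_add_pi hq0 hq θ).div_const 4)]
  have hswap := (Equiv.prodComm ℕ ℕ).hasSum_iff.mpr hsummable.hasSum
  refine (hswap.prod_fiberwise fun j => (hswap.summable.prod_factor j).hasSum).congr_fun
    fun j => ?_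
  rw [← tsum_mul_left]
  refine tsum_congr fun k => ?_
  simp only [Function.comp_apply, Equiv.prodComm_apply, Prod.swap_prod_mk]
  rw [pow_right_comm]
  ring

lemma norm_exp_neg_pi_div_lt_one {x : ℝ} (hx : 0 < x) : ‖Real.exp (-π / x)‖ < 1 := by
  rw [Real.norm_of_nonneg (Real.exp_nonneg _), Real.exp_lt_one_iff]
  exact div_neg_of_neg_of_pos (neg_neg_of_pos Real.pi_pos) hx

theorem hasSum_cos_mul_tsum_neg_one_zpow_div {x : ℝ} (hx : 0 < x) (θ : ℝ) :
    HasSum (fun j : ℕ => Real.cos ((2 * j + 1) * θ) *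
        ∑' m : ℤ, (-1 : ℝ) ^ m / ((x * m) ^ 2 + (2 * (j : ℝ) + 1) ^ 2))
      (π / (2 * x) * Real.log (cosTheta (Real.exp (-π / x)) θ /
        cosTheta (Real.exp (-π / x)) (θ + π))) := by
  convert! (hasSum_cos_div_mul_tsum_odd_pow (Real.exp_ne_zero _)
    (norm_exp_neg_pi_div_lt_one hx) θ).mul_left (2 * π / x) using 1
  · funext j
    have hj : (0 : ℝ) < 2 * j + 1 := by positivity
    have hexp : Real.exp (-π / x) ^ (2 * j + 1) = Real.exp (-(π * (2 * j + 1) / x)) := by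
      rw [← Real.exp_nat_mul]
      push_cast
      ring_nf
    rw [(hasSum_neg_one_zpow_div_mul_int_sq_add_sq hx.ne' hj.ne').tsum_eq, hexp,
      (hasSum_exp_neg_pow_odd (by positivity : 0 < π * (2 * j + 1) / x)).tsum_eq]
    field_simp
  · ring

end LambertSeries

lemma hasSum_tsum_neg_one_zpow_div_four_mul_add_one {x : ℝ} (hx : 0 < x) :
    HasSum (fun n : ℤ => ∑' m : ℤ, (-1 : ℝ) ^ (m + n) / ((x * m) ^ 2 + (4 * (n : ℝ) + 1) ^ 2))
      (π / (√2 * x) * Real.log (cosTheta (Real.exp (-π / x)) (π / 4) /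
        cosTheta (Real.exp (-π / x)) (π / 4 + π))) := by
  have heven : Function.Even fun a : ℝ =>
      Real.cos (a * (π / 4)) * ∑' m : ℤ, (-1 : ℝ) ^ m / ((x * m) ^ 2 + a ^ 2) := fun a => by
    simp only [neg_mul, Real.cos_neg, neg_sq]
  have hsum := (hasSum_int_four_mul_add_one_iff heven).mpr
    (hasSum_cos_mul_tsum_neg_one_zpow_div hx (π / 4))
  have hsqrt : √2 * √2 = 2 := Real.mul_self_sqrt zero_le_two
  convert! hsum.mul_left √2 using 1
  · funext n
    rw [cos_four_mul_add_one_mul_pi_div_four, ← mul_assoc, ← tsum_mul_left]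
    refine tsum_congr fun m => ?_
    rw [zpow_add₀ (neg_ne_zero.mpr one_ne_zero)]
    linear_combination (-(-1) ^ m * (-1) ^ n / ((x * m) ^ 2 + (4 * (n : ℝ) + 1) ^ 2) / 2) * hsqrt
  · rw [← mul_assoc]
    congr 1
    field_simp
    linear_combination - hsqrt

/-- For real `x > 0`, with `q = e^{-π/x}`,
`F_{(4,1)}(x) = -(π/(√2 x)) log((φ(-q¹⁶) - √2 q ψ(-q⁸))/(φ(-q¹⁶) + √2 q ψ(-q⁸)))`. -/
theorem F41_theta_form (x : ℝ) (hx : 0 < x) (q : ℝ)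
    (hq : q = Real.exp (-Real.pi / x)) :
    Tendsto (fun N : ℕ => ∑ n ∈ Finset.Ioo (-(N : ℤ)) (N : ℤ),
        ∑' m : ℤ, (-1 : ℝ) ^ (m + n) / ((x * m) ^ 2 + (4 * (n : ℝ) + 1) ^ 2))
      atTop
      (nhds (-(Real.pi / (Real.sqrt 2 * x)) *
        Real.log ((phi (-(q ^ 16)) - Real.sqrt 2 * q * psi (-(q ^ 8)))
          / (phi (-(q ^ 16)) + Real.sqrt 2 * q * psi (-(q ^ 8)))))) := by
  have hnorm : ‖q‖ < 1 := by
    rw [hq]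
    exact norm_exp_neg_pi_div_lt_one hx
  have hsum := hasSum_tsum_neg_one_zpow_div_four_mul_add_one hx
  rw [← hq, cosTheta_pi_div_four hnorm, cosTheta_pi_div_four_add_pi hnorm,
    ← inv_div (phi _ - _), Real.log_inv, mul_neg, ← neg_mul] at hsum
  exact hsum.comp Finset.tendsto_Ioo_neg
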